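/- Let L be a propositional M-logic and L' = [L, S5]^xd. For every propositional (M ∪ {□_E})-formula β in which every occurrence of every proposition letter lies within the scope of some occurrence of □_E, the formula β → □_E β belongs to L'. -/

import Mathlib

namespace PropML

/-- propositional modal formulas over modal signature `M` -/
inductive PF (M : Type) : Type
  | atom : ℕ → PF M
  | neg : PF M → PF M
  | and : PF M → PF M → PF M
  | box : M → PF M → PF M
  deriving DecidableEq

namespace PF

variable {M M' : Type}

def imp (φ ψ : PF M) : PF M := .neg (.and φ (.neg ψ))

def or (φ ψ : PF M) : PF M := .neg (.and (.neg φ) (.neg ψ))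

def dia (m : M) (φ : PF M) : PF M := .neg (.box m (.neg φ))

/-- `⊥` -/
def bot : PF M := .and (.atom 0) (.neg (.atom 0))

/-- renaming of modal operators -/
def mapOp (f : M → M') : PF M → PF M'
  | atom n => atom n
  | neg φ => neg (mapOp f φ)
  | and φ ψ => and (mapOp f φ) (mapOp f ψ)
  | box m φ => box (f m) (mapOp f φ)

/-- uniform substitution -/
def substP (σ : ℕ → PF M) : PF M → PF M
  | atom n => σ n
  | neg φ => neg (substP σ φ)
  | and φ ψ => and (substP σ φ) (substP σ ψ)
  | box m φ => box m (substP σ φ)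

end PF

/-- evaluation treating atoms and boxed formulas as atomic; used to define
the classical tautologies of the modal language -/
def tautEval {M : Type} (v : PF M → Prop) : PF M → Prop
  | .atom n => v (.atom n)
  | .neg φ => ¬ tautEval v φ
  | .and φ ψ => tautEval v φ ∧ tautEval v ψ
  | .box m φ => v (.box m φ)

/-- classical tautologies of the propositional modal language -/
def IsTaut {M : Type} (φ : PF M) : Prop := ∀ v, tautEval v φ

/-- a (normal) propositional modal `M`-logic -/
structure IsPLogic {M : Type} (L : Set (PF M)) : Prop where
  taut : ∀ φ, IsTaut φ → φ ∈ L
  kax : ∀ (m : M) (n k : ℕ),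
    PF.imp (.box m (PF.imp (.atom n) (.atom k)))
      (PF.imp (.box m (.atom n)) (.box m (.atom k))) ∈ L
  mp : ∀ φ ψ, PF.imp φ ψ ∈ L → φ ∈ L → ψ ∈ L
  nec : ∀ m φ, φ ∈ L → PF.box m φ ∈ L
  subst : ∀ (σ : ℕ → PF M) φ, φ ∈ L → PF.substP σ φ ∈ L

/-- A Kripke `M`-frame. -/
structure KFrame (M : Type) where
  W : Type
  ne : Nonempty W
  R : M → W → W → Prop

/-- truth of a propositional formula in a Kripke model `(F, V)` -/
def PVal {M : Type} {F : KFrame M} (V : ℕ → F.W → Prop) : PF M → F.W → Prop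
  | .atom n, w => V n w
  | .neg φ, w => ¬ PVal V φ w
  | .and φ ψ, w => PVal V φ w ∧ PVal V ψ w
  | .box m φ, w => ∀ v, F.R m w v → PVal V φ v

/-- validity of a propositional formula on a frame -/
def PValid {M : Type} (F : KFrame M) (φ : PF M) : Prop :=
  ∀ (V : ℕ → F.W → Prop) (w : F.W), PVal (F := F) V φ w

/-- `F` is a frame for the logic `L` -/
def FrameFor {M : Type} (F : KFrame M) (L : Set (PF M)) : Prop :=
  ∀ φ ∈ L, PValid F φ

/-- `L` is Kripke complete -/
def KComplete {M : Type} (L : Set (PF M)) : Prop :=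
  ∀ φ, (∀ F : KFrame M, FrameFor F L → PValid F φ) → φ ∈ L

/-- global consequence `φ ⊢*_L ψ`: `ψ` is in the smallest set including
`L ∪ {φ}` closed under Modus Ponens and Necessitation -/
inductive PGlobal {M : Type} (L : Set (PF M)) (φ : PF M) : PF M → Prop
  | ax {ψ} : ψ ∈ L → PGlobal L φ ψ
  | prem : PGlobal L φ φ
  | mp {ψ χ} : PGlobal L φ (PF.imp ψ χ) → PGlobal L φ ψ → PGlobal L φ χ
  | nec (m : M) {ψ} : PGlobal L φ ψ → PGlobal L φ (PF.box m ψ)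

/-- `L` is globally Kripke complete -/
def GloballyKComplete {M : Type} (L : Set (PF M)) : Prop :=
  ∀ φ ψ, PGlobal L φ ψ ↔
    ∀ F : KFrame M, FrameFor F L → ∀ V : ℕ → F.W → Prop,
      (∀ w, PVal (F := F) V φ w) → ∀ w, PVal (F := F) V ψ w

/-- the S5 axioms for the operator `e` -/
def ContainsS5 {M : Type} (L : Set (PF M)) (e : M) : Prop :=
  PF.imp (.box e (.atom 0)) (.atom 0) ∈ L ∧
  PF.imp (.box e (.atom 0)) (.box e (.box e (.atom 0))) ∈ L ∧
  PF.imp (PF.dia e (.atom 0)) (.box e (PF.dia e (.atom 0))) ∈ L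

/-- an `(E, κ)`-homogeneous model: in each `E`-equivalence class, each formula
is satisfied either nowhere or at exactly `κ` worlds -/
def EHomog {M : Type} {F : KFrame M} (e : M) (V : ℕ → F.W → Prop)
    (κ : Cardinal) : Prop :=
  ∀ (w : F.W) (φ : PF M),
    Cardinal.mk {v : F.W // F.R e w v ∧ PVal (F := F) V φ v} = 0 ∨
    Cardinal.mk {v : F.W // F.R e w v ∧ PVal (F := F) V φ v} = κ

/-- `L` admits `E`-homogeneous models -/
def AdmitsEHomog {M : Type} (e : M) (L : Set (PF M)) : Prop :=
  ∃ κ : Cardinal, Cardinal.aleph0 ≤ κ ∧ ∀ κ', κ ≤ κ' → ∀ φ ∉ L,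
    ∃ F : KFrame M, FrameFor F L ∧ ∃ V : ℕ → F.W → Prop,
      EHomog e V κ' ∧ ∃ w, ¬ PVal (F := F) V φ w

/-- `L` admits `E`-homogeneous models for global consequence -/
def AdmitsEHomogGlobal {M : Type} (e : M) (L : Set (PF M)) : Prop :=
  ∃ κ : Cardinal, Cardinal.aleph0 ≤ κ ∧ ∀ κ', κ ≤ κ' → ∀ φ ψ, ¬ PGlobal L φ ψ →
    ∃ F : KFrame M, FrameFor F L ∧ ∃ V : ℕ → F.W → Prop,
      EHomog e V κ' ∧ (∀ w, PVal (F := F) V φ w) ∧ ∃ w, ¬ PVal (F := F) V ψ w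

/-- the fusion `L1 ⊗_E L2` of two logics sharing the S5 operator `□_E`
(designated by `none` in each component signature): the smallest propositional
modal logic in the combined language (with the single shared `□_E`) including
`L1 ∪ L2` -/
def fusionE {M1 M2 : Type} (L1 : Set (PF (Option M1))) (L2 : Set (PF (Option M2))) :
    Set (PF (Option (M1 ⊕ M2))) :=
  ⋂₀ {L | IsPLogic L ∧
    PF.mapOp (Option.map Sum.inl) '' L1 ⊆ L ∧
    PF.mapOp (Option.map Sum.inr) '' L2 ⊆ L}

/-- the propositional modal logic `S5` (of the single operator `□_E`) -/
def S5L : Set (PF Unit) := ⋂₀ {L | IsPLogic L ∧ ContainsS5 L ()}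

/-- the left commutativity axiom `□□_E p → □_E □ p` -/
def lcom {M : Type} (m : M) : PF (Option M) :=
  PF.imp (.box (some m) (.box none (.atom 0))) (.box none (.box (some m) (.atom 0)))

/-- the right commutativity axiom `□_E □ p → □ □_E p` -/
def rcom {M : Type} (m : M) : PF (Option M) :=
  PF.imp (.box none (.box (some m) (.atom 0))) (.box (some m) (.box none (.atom 0)))

/-- the semicommutator `[L, S5]^xd = L ⊗ S5 + {lcom_□ : □ ∈ M}`
(`□_E` is `none`) -/
def LS5xd {M : Type} (L : Set (PF M)) : Set (PF (Option M)) :=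
  ⋂₀ {L' | IsPLogic L' ∧
    PF.mapOp Option.some '' L ⊆ L' ∧
    PF.mapOp (fun _ => (none : Option M)) '' S5L ⊆ L' ∧
    ∀ m : M, lcom m ∈ L'}

/-- the commutator `[L, S5]^cd = [L, S5]^xd + {rcom_□ : □ ∈ M}` -/
def LS5cd {M : Type} (L : Set (PF M)) : Set (PF (Option M)) :=
  ⋂₀ {L' | IsPLogic L' ∧ LS5xd L ⊆ L' ∧ ∀ m : M, rcom m ∈ L'}

/-- the two domain semantics: expanding (`xd`) and constant (`cd`) domains -/
inductive DSem : Type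
  | xd | cd
  deriving DecidableEq

/-- `[L, S5]^d` -/
def LS5 {M : Type} (d : DSem) (L : Set (PF M)) : Set (PF (Option M)) :=
  match d with
  | .xd => LS5xd L
  | .cd => LS5cd L

/-- the fixed Gödel numbering of propositional formulas (relative to a
numbering `eM` of the modal operators) -/
def PF.encode {M : Type} (eM : M → ℕ) : PF M → ℕ
  | .atom n => Nat.pair 0 n
  | .neg φ => Nat.pair 1 (PF.encode eM φ)
  | .and φ ψ => Nat.pair 2 (Nat.pair (PF.encode eM φ) (PF.encode eM ψ))
  | .box m φ => Nat.pair 3 (Nat.pair (eM m) (PF.encode eM φ))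

/-- decidability of a propositional logic w.r.t. the fixed Gödel numbering -/
def DecidableP {M : Type} (eM : M → ℕ) (L : Set (PF M)) : Prop :=
  ComputablePred (fun n : ℕ => ∃ φ ∈ L, PF.encode eM φ = n)

/-- decidability of the global consequence relation -/
def GloballyDecidableP {M : Type} (eM : M → ℕ) (L : Set (PF M)) : Prop :=
  ComputablePred (fun p : ℕ × ℕ =>
    ∃ φ ψ, PGlobal L φ ψ ∧ PF.encode eM φ = p.1 ∧ PF.encode eM ψ = p.2)

end PropML

namespace PropML

/-- every occurrence of every proposition letter lies within the scope of some
occurrence of `□_E` (`□_E` is the operator `none`) -/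
def Guarded {M : Type} : PF (Option M) → Prop
  | .atom _ => False
  | .neg φ => Guarded φ
  | .and φ ψ => Guarded φ ∧ Guarded ψ
  | .box none _ => True
  | .box (some _) φ => Guarded φ

section Helpers
variable {N : Type} {K : Set (PF N)}

theorem IsPLogic.t1 (h : IsPLogic K) {a b : PF N} (ha : a ∈ K)
    (t : ∀ v, tautEval v a → tautEval v b) : b ∈ K := by
  refine h.mp a b (h.taut _ ?_) ha
  intro v
  have := t v
  simp only [PF.imp, tautEval]
  tauto

theorem IsPLogic.t2 (h : IsPLogic K) {a b c : PF N} (ha : a ∈ K) (hb : b ∈ K)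
    (t : ∀ v, tautEval v a → tautEval v b → tautEval v c) : c ∈ K := by
  refine h.mp b c (h.t1 ha ?_) hb
  intro v
  have := t v
  simp only [PF.imp, tautEval]
  tauto

theorem IsPLogic.trans (h : IsPLogic K) {a b c : PF N} (ha : PF.imp a b ∈ K)
    (hb : PF.imp b c ∈ K) : PF.imp a c ∈ K := by
  refine h.t2 ha hb ?_
  intro v
  simp only [PF.imp, tautEval]
  tauto

theorem IsPLogic.k (h : IsPLogic K) (m : N) (a b : PF N) :
    PF.imp (.box m (PF.imp a b)) (PF.imp (.box m a) (.box m b)) ∈ K := by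
  have := h.subst (fun n => if n = 0 then a else b) _ (h.kax m 0 1)
  simpa [PF.imp, PF.substP] using this

theorem IsPLogic.mono (h : IsPLogic K) (m : N) {a b : PF N} (hab : PF.imp a b ∈ K) :
    PF.imp (.box m a) (.box m b) ∈ K :=
  h.mp _ _ (h.k m a b) (h.nec m _ hab)

theorem IsPLogic.guarded_aux {M : Type} {K : Set (PF (Option M))} (h : IsPLogic K)
    (hT : ∀ a, PF.imp (.box none a) a ∈ K)
    (h4 : ∀ a, PF.imp (.box none a) (.box none (.box none a)) ∈ K)
    (h5 : ∀ a, PF.imp (PF.dia none a) (.box none (PF.dia none a)) ∈ K)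
    (hc : ∀ m a, PF.imp (.box (some m) (.box none a)) (.box none (.box (some m) a)) ∈ K)
    (β : PF (Option M)) (hβ : Guarded β) : PF.imp β (.box none β) ∈ K := by
  induction β with
  | atom n => exact hβ.elim
  | neg a ih =>
    have ih := ih hβ
    -- dia (neg a) is equivalent to neg (box a), hence to neg a
    have e1 : PF.imp (.box none (.neg (.neg a))) a ∈ K := by
      refine h.t1 (hT (.neg (.neg a))) ?_
      intro v
      simp only [PF.imp, tautEval]
      tauto
    have e2 : PF.imp (.box none a) (.box none (.neg (.neg a))) ∈ K := by
      refine h.mono none (h.taut _ ?_)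
      intro v
      simp only [PF.imp, tautEval]
      tauto
    have e3 : PF.imp (PF.dia none (.neg a)) (.neg a) ∈ K := by
      refine h.t1 (h.trans ih e2) ?_
      intro v
      simp only [PF.imp, PF.dia, tautEval]
      tauto
    have e4 : PF.imp (.neg a) (PF.dia none (.neg a)) ∈ K := by
      refine h.t1 e1 ?_
      intro v
      simp only [PF.imp, PF.dia, tautEval]
      tauto
    exact h.trans e4 (h.trans (h5 _) (h.mono none e3))
  | and a b iha ihb =>
    have iha := iha hβ.1
    have ihb := ihb hβ.2
    have e1 : PF.imp a (PF.imp b (.and a b)) ∈ K := by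
      refine h.taut _ ?_
      intro v
      simp only [PF.imp, tautEval]
      tauto
    have e2 := h.trans (h.trans iha (h.mono none e1)) (h.k none _ _)
    refine h.t2 e2 ihb ?_
    intro v
    simp only [PF.imp, tautEval]
    tauto
  | box m a ih =>
    cases m with
    | none => exact h4 a
    | some m => exact h.trans (h.mono _ (ih hβ)) (hc m a)

end Helpers

/-- For every propositional `M`-logic `L` and every formula
`β` of the extended language all of whose proposition letters occur within the
scope of `□_E`, the formula `β → □_E β` belongs to `[L, S5]^xd`. -/
theorem guarded_imp_boxE {M : Type} (L : Set (PF M)) (hL : IsPLogic L)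
    (β : PF (Option M)) (hβ : Guarded β) :
    PF.imp β (.box none β) ∈ LS5xd L := by
  rw [LS5xd, Set.mem_sInter]
  rintro K ⟨h, -, hS, hc⟩
  have s5 : ∀ φ, (∀ X : Set (PF Unit), IsPLogic X ∧ ContainsS5 X () → φ ∈ X) → ∀ a,
      PF.substP (fun _ => a) (PF.mapOp (fun _ => (none : Option M)) φ) ∈ K := by
    intro φ hφ a
    exact h.subst _ _ (hS ⟨φ, Set.mem_sInter.2 hφ, rfl⟩)
  refine h.guarded_aux ?_ ?_ ?_ ?_ β hβ
  · exact s5 _ fun X hX => hX.2.1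
  · exact s5 _ fun X hX => hX.2.2.1
  · exact s5 _ fun X hX => hX.2.2.2
  · exact fun m a => h.subst (fun _ => a) _ (hc m)

end PropML
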